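/- Let i ≠ j and suppose w_i = 0, w_j = 0, x ≠ 0, y ≠ 0, and w_k ≠ 0 for every k ∉ {i, j}. Then w is a critical point of l (∇l(w) = 0) whose Hessian has a strictly negative eigenvalue and a strictly positive eigenvalue; in particular w is a strict saddle point: it is neither a local minimum nor a local maximum of l. -/

import Mathlib

/-- The width-one linear network loss `l(w) = ½(y − (∏ₖ wₖ) x)²`. -/
noncomputable def wLoss (n : ℕ) (x y : ℝ) (w : Fin n → ℝ) : ℝ :=
  (1 / 2) * (y - (∏ k, w k) * x) ^ 2

/-- The partial derivative of `f` with respect to the `i`-th coordinate, at `w`. -/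
noncomputable def pderivAt {n : ℕ} (i : Fin n) (f : (Fin n → ℝ) → ℝ)
    (w : Fin n → ℝ) : ℝ :=
  deriv (fun t => f (Function.update w i t)) (w i)

/-- The Hessian matrix of the width-one loss at `w`. -/
noncomputable def wHess (n : ℕ) (x y : ℝ) (w : Fin n → ℝ) : Matrix (Fin n) (Fin n) ℝ :=
  Matrix.of fun a b => pderivAt b (pderivAt a (wLoss n x y)) w

/-!
The loss is `φ ∘ p` with `p = ∏ₖ wₖ` and `φ q = ½(y - q x)²`. Since two factors of `p` vanish at
`w`, so does its gradient, and the only nonzero second partial derivatives of `p` are the mixed ones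
in directions `i` and `j`, both equal to `P = ∏_{k ≠ i, j} wₖ`. The Hessian of the loss is therefore
`c (Eᵢⱼ + Eⱼᵢ)` with `c = φ'(0) P = -xyP ≠ 0`, whose nonzero eigenvalues are `±c`. Moving only the
coordinates `i` and `j`, one finds a continuous curve through `w` along which `p` is `q ↦ q P`;
since `φ'(0) P ≠ 0`, the loss has no local extremum along that curve, hence none at `w`.
-/

open Finset Function
open scoped Matrix

section Products

variable {ι : Type*} {i j : ι}

lemma prod_update_update {M : Type*} [Fintype ι] [DecidableEq ι] [CommMonoid M]
    (hij : i ≠ j) (w : ι → M) (a b : M) :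
    ∏ k, update (update w i a) j b k = a * b * ∏ k ∈ {i, j}ᶜ, w k := by
  have hi : i ∈ univ \ {j} := by simpa using hij
  have hpair : (univ \ {j}) \ {i} = ({i, j}ᶜ : Finset ι) := by
    ext
    simp only [mem_sdiff, mem_univ, mem_singleton, mem_compl, mem_insert]
    tauto
  rw [prod_update_of_mem (mem_univ j), prod_update_of_mem hi, hpair, mul_left_comm, mul_assoc]

lemma prod_compl_eq_zero {M : Type*} [Fintype ι] [DecidableEq ι] [CommMonoidWithZero M]
    {w : ι → M} {t : Finset ι} (hwi : w i = 0) (hwj : w j = 0) (ht : i ∉ t ∨ j ∉ t) :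
    ∏ k ∈ tᶜ, w k = 0 := by
  rcases ht with hi | hj
  · exact prod_eq_zero (mem_compl.2 hi) hwi
  · exact prod_eq_zero (mem_compl.2 hj) hwj

lemma hasFDerivAt_prod_zero {𝕜 : Type*} [NontriviallyNormedField 𝕜] [Fintype ι] {w : ι → 𝕜}
    (hij : i ≠ j) (hwi : w i = 0) (hwj : w j = 0) :
    HasFDerivAt (fun u : ι → 𝕜 ↦ ∏ k, u k) (0 : (ι → 𝕜) →L[𝕜] 𝕜) w := by
  classical
  refine hasFDerivAt_finsetProd.congr_fderiv (sum_eq_zero fun a _ ↦ ?_)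
  rw [← compl_singleton, prod_compl_eq_zero hwi hwj (by grind)]
  exact zero_smul 𝕜 (ContinuousLinearMap.proj a : (ι → 𝕜) →L[𝕜] 𝕜)

end Products

section LocalExtr

-- `√q = 0` for `q < 0`, so `(√q - √(-q)) * (√q + √(-q)) = q⁺ - q⁻ = q`.
lemma exists_continuous_mul_eq_self :
    ∃ a b : ℝ → ℝ, Continuous a ∧ Continuous b ∧ a 0 = 0 ∧ b 0 = 0 ∧ ∀ q, a q * b q = q := by
  refine ⟨fun q ↦ √q - √(-q), fun q ↦ √q + √(-q), by fun_prop, by fun_prop, by simp, by simp,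
    fun q ↦ ?_⟩
  calc (√q - √(-q)) * (√q + √(-q)) = √q ^ 2 - √(-q) ^ 2 := by ring
    _ = max q 0 - max (-q) 0 := by rw [Real.sq_sqrt', Real.sq_sqrt']
    _ = q := max_zero_sub_max_neg_zero_eq_self q

lemma not_isLocalExtr_comp_prod {ι : Type*} [Fintype ι] [DecidableEq ι] {i j : ι} {w : ι → ℝ}
    {φ : ℝ → ℝ} {φ' : ℝ} (hij : i ≠ j) (hwi : w i = 0) (hwj : w j = 0)
    (hw : ∏ k ∈ {i, j}ᶜ, w k ≠ 0) (hφ : HasDerivAt φ φ' 0) (hφ' : φ' ≠ 0) :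
    ¬ IsLocalExtr (fun u ↦ φ (∏ k, u k)) w := by
  intro hextr
  obtain ⟨a, b, ha, hb, ha0, hb0, hab⟩ := exists_continuous_mul_eq_self
  set P := ∏ k ∈ {i, j}ᶜ, w k
  let γ : ℝ → ι → ℝ := fun q ↦ update (update w i (a q)) j (b q)
  have hγ : Continuous γ := (continuous_const.update i ha).update j hb
  have hγ0 : γ 0 = w := by
    simp only [γ, ha0, hb0]
    rw [(update_eq_self_iff (f := w)).2 hwi.symm, (update_eq_self_iff (f := w)).2 hwj.symm]
  have hφγ : (fun u ↦ φ (∏ k, u k)) ∘ γ = fun q ↦ φ (q * P) := by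
    ext q
    simp only [comp_apply, γ, prod_update_update hij, hab, P]
  have hderiv : HasDerivAt (fun q ↦ φ (q * P)) (φ' * (1 * P)) 0 :=
    HasDerivAt.comp_of_eq 0 hφ ((hasDerivAt_id 0).mul_const P) (zero_mul P).symm
  have hextr' : IsLocalExtr (fun q ↦ φ (q * P)) 0 :=
    hφγ ▸ (hγ0.symm ▸ hextr).comp_continuous hγ.continuousAt
  exact mul_ne_zero hφ' (mul_ne_zero one_ne_zero hw) (hextr'.hasDerivAt_eq_zero hderiv)

end LocalExtr

section Eigenvectors

variable {m R : Type*} [Fintype m] [DecidableEq m] [CommSemiring R] {i j : m}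

lemma exists_mulVec_eq_smul_of_mul_self_eq (hij : i ≠ j) {c μ : R} (hc : c ≠ 0)
    (hμ : μ * μ = c * c) :
    ∃ v : m → R, v ≠ 0 ∧ (c • (.single i j 1 + .single j i 1 : Matrix m m R)) *ᵥ v = μ • v := by
  let v : m → R := c • Pi.single i 1 + μ • Pi.single j 1
  have hvi : v i = c := by simp [v, hij]
  have hvj : v j = μ := by simp [v, hij.symm]
  refine ⟨v, fun hv ↦ hc (by rw [← hvi, hv, Pi.zero_apply]), ?_⟩
  rw [Matrix.smul_mulVec, Matrix.add_mulVec, Matrix.single_mulVec_eq, Matrix.single_mulVec_eq,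
    hvi, hvj]
  simp only [v, smul_add, smul_smul, one_mul, mul_comm c μ, hμ]

end Eigenvectors

section PartialDerivatives

variable {n : ℕ}

lemma pderivAt_comp {f : (Fin n → ℝ) → ℝ} {φ : ℝ → ℝ} {u : Fin n → ℝ} (i : Fin n)
    (hφ : DifferentiableAt ℝ φ (f u))
    (hf : DifferentiableAt ℝ (fun t ↦ f (update u i t)) (u i)) :
    pderivAt i (fun v ↦ φ (f v)) u = deriv φ (f u) * pderivAt i f u := by
  have hu : f (update u i (u i)) = f u := by rw [update_eq_self]
  simpa only [pderivAt, comp_def, hu] using deriv_comp (u i) (hu.symm ▸ hφ) hf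

lemma pderivAt_prod (s : Finset (Fin n)) (i : Fin n) (u : Fin n → ℝ) :
    pderivAt i (fun v ↦ ∏ k ∈ s, v k) u = if i ∈ s then ∏ k ∈ s \ {i}, u k else 0 := by
  split_ifs with hi
  · simp [pderivAt, prod_update_of_mem hi]
  · simp [pderivAt, prod_update_of_notMem hi]

end PartialDerivatives

section Loss

variable {n : ℕ} {x y : ℝ} {w : Fin n → ℝ} {i j : Fin n}

/-- The loss as a function of the end-to-end weight `p = ∏ₖ wₖ` of the network. -/
noncomputable def endToEndLoss (x y p : ℝ) : ℝ :=
  (1 / 2) * (y - p * x) ^ 2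

lemma wLoss_eq_endToEndLoss_prod :
    wLoss n x y = fun u ↦ endToEndLoss x y (∏ k, u k) :=
  rfl

lemma hasDerivAt_endToEndLoss (x y p : ℝ) :
    HasDerivAt (endToEndLoss x y) (-(y - p * x) * x) p := by
  convert! ((((hasDerivAt_id p).mul_const x).const_sub y).pow 2).const_mul (1 / 2 : ℝ) using 1
  simp only [id_eq, Nat.add_one_sub_one, pow_one, Nat.cast_ofNat]
  ring

lemma fderiv_wLoss_eq_zero (hij : i ≠ j) (hwi : w i = 0) (hwj : w j = 0) :
    fderiv ℝ (wLoss n x y) w = 0 := by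
  have hcomp := (hasDerivAt_endToEndLoss x y (∏ k, w k)).comp_hasFDerivAt w
    (hasFDerivAt_prod_zero hij hwi hwj)
  rw [smul_zero] at hcomp
  exact hcomp.fderiv

lemma pderivAt_wLoss (a : Fin n) (u : Fin n → ℝ) :
    pderivAt a (wLoss n x y) u = -(y - (∏ k, u k) * x) * x * ∏ k ∈ univ \ {a}, u k := by
  have hloss := hasDerivAt_endToEndLoss x y (∏ k, u k)
  rw [wLoss_eq_endToEndLoss_prod, pderivAt_comp a hloss.differentiableAt, hloss.deriv,
    pderivAt_prod, if_pos (mem_univ a)]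
  simp only [prod_update_of_mem (mem_univ a)]
  fun_prop

lemma wHess_apply (hij : i ≠ j) (hwi : w i = 0) (hwj : w j = 0) (a b : Fin n) :
    wHess n x y w a b = -(y * x) * if a = b then 0 else ∏ k ∈ {a, b}ᶜ, w k := by
  have hprod (t : ℝ) : ∏ k, update w b t k = 0 := by
    rw [prod_update_of_mem (mem_univ b), ← compl_eq_univ_sdiff,
      prod_compl_eq_zero hwi hwj (by grind), mul_zero]
  have hpair : (univ \ {a}) \ {b} = ({a, b}ᶜ : Finset (Fin n)) := by ext; simp
  calc wHess n x y w a b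
      = deriv (fun t ↦ -(y * x) * ∏ k ∈ univ \ {a}, update w b t k) (w b) := by
        simp only [wHess, Matrix.of_apply, pderivAt.eq_1 b, pderivAt_wLoss, hprod, zero_mul,
          sub_zero, neg_mul]
    _ = -(y * x) * pderivAt b (fun u ↦ ∏ k ∈ univ \ {a}, u k) w := by
        rw [deriv_const_mul_field, pderivAt]
    _ = -(y * x) * if a = b then 0 else ∏ k ∈ {a, b}ᶜ, w k := by
        rw [pderivAt_prod, hpair]
        simp [eq_comm, ite_not]

lemma wHess_eq_smul (hij : i ≠ j) (hwi : w i = 0) (hwj : w j = 0) :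
    wHess n x y w = (-(y * x) * ∏ k ∈ {i, j}ᶜ, w k) •
      (Matrix.single i j 1 + Matrix.single j i 1) := by
  ext a b
  rw [wHess_apply hij hwi hwj, Matrix.smul_apply, Matrix.add_apply, smul_eq_mul, mul_assoc]
  congr 1
  by_cases hab : a = i ∧ b = j
  · obtain ⟨rfl, rfl⟩ := hab
    simp [hij]
  by_cases hba : a = j ∧ b = i
  · obtain ⟨rfl, rfl⟩ := hba
    simp [hij, hij.symm, pair_comm]
  have hzero : (if a = b then 0 else ∏ k ∈ {a, b}ᶜ, w k) = 0 :=
    ite_eq_left_iff.2 fun _ ↦ prod_compl_eq_zero hwi hwj (by grind)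
  rw [hzero, Matrix.single_apply_of_ne _ _ _ _ _ (by tauto),
    Matrix.single_apply_of_ne _ _ _ _ _ (by tauto), add_zero, mul_zero]

end Loss

theorem width_one_strict_saddle
    (n : ℕ) (hn : 2 ≤ n) (x y : ℝ) (hx : x ≠ 0) (hy : y ≠ 0)
    (w : Fin n → ℝ) (i j : Fin n) (hij : i ≠ j)
    (hwi : w i = 0) (hwj : w j = 0) (hw : ∀ k, k ≠ i → k ≠ j → w k ≠ 0) :
    fderiv ℝ (wLoss n x y) w = 0 ∧
    (∃ μ : ℝ, μ < 0 ∧ ∃ v : Fin n → ℝ, v ≠ 0 ∧ (wHess n x y w).mulVec v = μ • v) ∧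
    (∃ μ : ℝ, 0 < μ ∧ ∃ v : Fin n → ℝ, v ≠ 0 ∧ (wHess n x y w).mulVec v = μ • v) ∧
    ¬ IsLocalMin (wLoss n x y) w ∧ ¬ IsLocalMax (wLoss n x y) w := by
  have hP : ∏ k ∈ {i, j}ᶜ, w k ≠ 0 :=
    prod_ne_zero_iff.2 fun k hk ↦ by
      obtain ⟨hki, hkj⟩ : k ≠ i ∧ k ≠ j := by simpa using hk
      exact hw k hki hkj
  have hc : -(y * x) * ∏ k ∈ {i, j}ᶜ, w k ≠ 0 :=
    mul_ne_zero (neg_ne_zero.2 (mul_ne_zero hy hx)) hP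
  have hextr : ¬ IsLocalExtr (wLoss n x y) w :=
    not_isLocalExtr_comp_prod hij hwi hwj hP (hasDerivAt_endToEndLoss x y 0) (by simp [hx, hy])
  rw [wHess_eq_smul hij hwi hwj]
  exact ⟨fderiv_wLoss_eq_zero hij hwi hwj,
    ⟨_, neg_lt_zero.2 (abs_pos.2 hc),
      exists_mulVec_eq_smul_of_mul_self_eq hij hc ((neg_mul_neg _ _).trans (abs_mul_abs_self _))⟩,
    ⟨_, abs_pos.2 hc, exists_mulVec_eq_smul_of_mul_self_eq hij hc (abs_mul_abs_self _)⟩,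
    fun hmin ↦ hextr hmin.isExtr, fun hmax ↦ hextr hmax.isExtr⟩
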